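/- arXiv:2412.18803 — 2 statements merged into one kernel-verified Lean document; each statement's English description precedes it below -/
import Mathlib

section
/- Bias identity for the AIPW pseudo-outcome with estimated nuisance functions: for every bounded measurable h : 𝒳 → ℝ, E[h(X)·Γ̃] − E[h(X)·τ(X)] = E[h(X)·r(X)], where r(x) := (e(x)/ẽ(x) − 1)(μ₁(x) − μ̃₁(x)) − ((1−e(x))/(1−ẽ(x)) − 1)(μ₀(x) − μ̃₀(x)). -/
open MeasureTheory ProbabilityTheory

def AipwBdd {𝒳 : Type*} [MeasurableSpace 𝒳] (g : 𝒳 → ℝ) : Prop :=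
  Measurable g ∧ ∃ C, ∀ x, |g x| ≤ C

theorem AipwBdd.mul {𝒳 : Type*} [MeasurableSpace 𝒳] {f g : 𝒳 → ℝ}
    (hf : AipwBdd f) (hg : AipwBdd g) : AipwBdd (fun x => f x * g x) := by
  obtain ⟨hf, C, hC⟩ := hf
  obtain ⟨hg, D, hD⟩ := hg
  refine ⟨hf.mul hg, C * D, fun x => ?_⟩
  rw [abs_mul]
  exact mul_le_mul (hC x) (hD x) (abs_nonneg _) ((abs_nonneg _).trans (hC x))

theorem AipwBdd.sub {𝒳 : Type*} [MeasurableSpace 𝒳] {f g : 𝒳 → ℝ}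
    (hf : AipwBdd f) (hg : AipwBdd g) : AipwBdd (fun x => f x - g x) := by
  obtain ⟨hf, C, hC⟩ := hf
  obtain ⟨hg, D, hD⟩ := hg
  refine ⟨hf.sub hg, C + D, fun x => ?_⟩
  exact (abs_sub _ _).trans (add_le_add (hC x) (hD x))

theorem AipwBdd.inv {𝒳 : Type*} [MeasurableSpace 𝒳] {f : 𝒳 → ℝ} {η : ℝ} (h0 : 0 < η)
    (hf : Measurable f) (hb : ∀ x, η ≤ f x) : AipwBdd (fun x => (f x)⁻¹) := by
  refine ⟨hf.inv, η⁻¹, fun x => ?_⟩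
  have := hb x
  rw [abs_of_pos (inv_pos.2 (h0.trans_le this))]
  exact inv_anti₀ h0 this

theorem AipwBdd.integrable {Ω 𝒳 : Type*} [MeasurableSpace Ω] [MeasurableSpace 𝒳]
    {P : Measure Ω} [IsProbabilityMeasure P] {X : Ω → 𝒳} (hX : Measurable X) {g : 𝒳 → ℝ}
    (hg : AipwBdd g) : Integrable (fun ω => g (X ω)) P := by
  obtain ⟨hg, C, hC⟩ := hg
  exact Integrable.of_bound (hg.comp hX).aestronglyMeasurable C (ae_of_all _ fun ω => hC _)

theorem AipwBdd.key {Ω 𝒳 : Type*} [MeasurableSpace Ω] [m𝒳 : MeasurableSpace 𝒳]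
    {P : Measure Ω} [IsProbabilityMeasure P] {X : Ω → 𝒳} (hX : Measurable X) {g : 𝒳 → ℝ}
    (hg : AipwBdd g) {Z F : Ω → ℝ} (hZ : Integrable Z P) (hc : P[Z | m𝒳.comap X] =ᵐ[P] F) :
    Integrable (fun ω => g (X ω) * Z ω) P ∧ Integrable (fun ω => g (X ω) * F ω) P ∧
    ∫ ω, g (X ω) * Z ω ∂P = ∫ ω, g (X ω) * F ω ∂P := by
  obtain ⟨hg, C, hC⟩ := hg
  have hle : m𝒳.comap X ≤ _ := hX.comap_le
  have hF : Integrable F P := integrable_condExp.congr hc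
  have hm : AEStronglyMeasurable (fun ω => g (X ω)) P := (hg.comp hX).aestronglyMeasurable
  have i1 : Integrable (fun ω => g (X ω) * Z ω) P :=
    hZ.bdd_mul hm (ae_of_all _ fun ω => hC _)
  refine ⟨i1, hF.bdd_mul hm (ae_of_all _ fun ω => hC _), ?_⟩
  have hsm : StronglyMeasurable[m𝒳.comap X] (fun ω => g (X ω)) :=
    (hg.comp (comap_measurable X)).stronglyMeasurable
  have := condExp_mul_of_stronglyMeasurable_left (μ := P) hsm (g := Z) i1 hZ
  rw [← integral_condExp hle]
  apply integral_congr_ae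
  filter_upwards [this, hc] with ω h1 h2
  rw [← h2]
  exact h1

/-- Bias identity for the AIPW pseudo-outcome with estimated nuisance functions: for every
bounded measurable `h`, `E[h(X)·Γ̃] − E[h(X)·τ(X)] = E[h(X)·r(X)]`, where
`r(x) := (e(x)/ẽ(x) − 1)(μ₁(x) − μ̃₁(x)) − ((1−e(x))/(1−ẽ(x)) − 1)(μ₀(x) − μ̃₀(x))`. -/
theorem aipw_estimated_nuisance_bias
    {Ω 𝒳 : Type*} [MeasurableSpace Ω] [m𝒳 : MeasurableSpace 𝒳]
    (P : Measure Ω) [IsProbabilityMeasure P]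
    (X : Ω → 𝒳) (W Y : Ω → ℝ)
    (hX : Measurable X) (hW : Measurable W) (hY : Measurable Y)
    (hW01 : ∀ᵐ ω ∂P, W ω = 0 ∨ W ω = 1)
    (M : ℝ) (hM : 0 < M) (hYb : ∀ᵐ ω ∂P, |Y ω| ≤ M)
    (e μ₀ μ₁ : 𝒳 → ℝ)
    (he : Measurable e) (hμ₀ : Measurable μ₀) (hμ₁ : Measurable μ₁)
    (C₀ C₁ : ℝ) (hμ₀b : ∀ x, |μ₀ x| ≤ C₀) (hμ₁b : ∀ x, |μ₁ x| ≤ C₁)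
    (η : ℝ) (hη₀ : 0 < η) (hη₁ : η < 1/2)
    (heb : ∀ x, η ≤ e x ∧ e x ≤ 1 - η)
    (hce : P[W | m𝒳.comap X] =ᵐ[P] fun ω => e (X ω))
    (hc1 : P[fun ω => W ω * Y ω | m𝒳.comap X] =ᵐ[P] fun ω => e (X ω) * μ₁ (X ω))
    (hc0 : P[fun ω => (1 - W ω) * Y ω | m𝒳.comap X]
        =ᵐ[P] fun ω => (1 - e (X ω)) * μ₀ (X ω))
    (μt₀ μt₁ et : 𝒳 → ℝ)
    (hμt₀ : Measurable μt₀) (hμt₁ : Measurable μt₁) (het : Measurable et)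
    (Ct₀ Ct₁ : ℝ) (hμt₀b : ∀ x, |μt₀ x| ≤ Ct₀) (hμt₁b : ∀ x, |μt₁ x| ≤ Ct₁)
    (η' : ℝ) (hη'₀ : 0 < η') (hη'₁ : η' < 1/2)
    (hetb : ∀ x, η' ≤ et x ∧ et x ≤ 1 - η') :
    ∀ (h : 𝒳 → ℝ) (Ch : ℝ), Measurable h → (∀ x, |h x| ≤ Ch) →
      (∫ ω, h (X ω) * (W ω * (Y ω - μt₁ (X ω)) / et (X ω) + μt₁ (X ω)
            - (1 - W ω) * (Y ω - μt₀ (X ω)) / (1 - et (X ω)) - μt₀ (X ω)) ∂P)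
        - (∫ ω, h (X ω) * (μ₁ (X ω) - μ₀ (X ω)) ∂P)
        = ∫ ω, h (X ω) * ((e (X ω) / et (X ω) - 1) * (μ₁ (X ω) - μt₁ (X ω))
            - ((1 - e (X ω)) / (1 - et (X ω)) - 1) * (μ₀ (X ω) - μt₀ (X ω))) ∂P := by
  intro h Ch hh hhb
  have bh : AipwBdd h := ⟨hh, Ch, hhb⟩
  have b0 : AipwBdd μ₀ := ⟨hμ₀, C₀, hμ₀b⟩
  have b1 : AipwBdd μ₁ := ⟨hμ₁, C₁, hμ₁b⟩
  have bt0 : AipwBdd μt₀ := ⟨hμt₀, Ct₀, hμt₀b⟩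
  have bt1 : AipwBdd μt₁ := ⟨hμt₁, Ct₁, hμt₁b⟩
  have bi := AipwBdd.inv hη'₀ het (fun x => (hetb x).1)
  have bj := AipwBdd.inv (f := fun x => 1 - et x) hη'₀ (measurable_const.sub het)
    (fun x => by linarith [(hetb x).2])
  have bg1 := bh.mul bi
  have bg0 := bh.mul bj
  have bg2 := (bg0.mul bt0)
  have bg3 := (bh.mul (bt1.sub bt0))
  have bτ := (bh.mul (b1.sub b0))
  have iW : Integrable W P := by
    refine Integrable.of_bound hW.aestronglyMeasurable 1 ?_
    filter_upwards [hW01] with ω hω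
    rcases hω with h | h <;> simp [h]
  have iWY : Integrable (fun ω => W ω * Y ω) P := by
    refine Integrable.of_bound (hW.mul hY).aestronglyMeasurable M ?_
    filter_upwards [hW01, hYb] with ω hω hy
    rcases hω with h | h <;> simp [h, hy, hM.le]
  have iVY : Integrable (fun ω => (1 - W ω) * Y ω) P := by
    refine Integrable.of_bound ((measurable_const.sub hW).mul hY).aestronglyMeasurable M ?_
    filter_upwards [hW01, hYb] with ω hω hy
    rcases hω with h | h <;> simp [h, hy, hM.le]
  obtain ⟨p1, p2, p3⟩ := bg1.key hX iWY hc1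
  obtain ⟨q1, q2, q3⟩ := bg0.key hX iVY hc0
  obtain ⟨r1, r2, r3⟩ := (bg1.mul bt1).key hX iW hce
  obtain ⟨s1, s2, s3⟩ := (bg0.mul bt0).key hX iW hce
  have t1 := bg2.integrable (P := P) hX
  have t2 := bg3.integrable (P := P) hX
  have t3 := bτ.integrable (P := P) hX
  have L := integral_add (((p1.sub q1).sub r1).sub s1) (t1.add t2)
  have R := integral_sub ((((p2.sub q2).sub r2).sub s2).add (t1.add t2)) t3
  have R' := integral_add (((p2.sub q2).sub r2).sub s2) (t1.add t2)
  have E1 := integral_sub' ((p1.sub q1).sub r1) s1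
  have E2 := integral_sub' (p1.sub q1) r1
  have E3 := integral_sub' p1 q1
  have F1 := integral_sub' ((p2.sub q2).sub r2) s2
  have F2 := integral_sub' (p2.sub q2) r2
  have F3 := integral_sub' p2 q2
  have LR : ∀ ω, et (X ω) ≠ 0 ∧ 1 - et (X ω) ≠ 0 := fun ω =>
    ⟨ne_of_gt (by linarith [(hetb (X ω)).1]), ne_of_gt (by linarith [(hetb (X ω)).2])⟩
  refine Eq.trans (congrArg₂ _ (Eq.trans (integral_congr_ae (ae_of_all _ fun ω => ?_)) L) rfl)
    (Eq.trans ?_ (Eq.trans R.symm (integral_congr_ae (ae_of_all _ fun ω => ?_))))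
  · simp only [Pi.sub_apply, Pi.add_apply]
    ring
  · congr 1
    refine Eq.trans ?_ R'.symm
    congr 1
    refine E1.trans (Eq.trans ?_ F1.symm)
    rw [E2, E3, F2, F3, p3, q3, r3, s3]
  · have := LR ω
    obtain ⟨u, v⟩ := this
    simp only [Pi.sub_apply, Pi.add_apply]
    field_simp
    ring
end

section
/- Bias bound for the one-step relative error estimator: for bounded measurable τ̂₁, τ̂₂ : 𝒳 → ℝ with |τ̂₁(x) − τ̂₂(x)| ≤ B for all x, | E[τ̂₁(X)² − τ̂₂(X)² − 2(τ̂₁(X) − τ̂₂(X))·Γ̃] − δ(τ̂₁, τ̂₂) | ≤ (2B/η′)·( E[|ẽ(X) − e(X)|·|μ̃₁(X) − μ₁(X)|] + E[|ẽ(X) − e(X)|·|μ̃₀(X) − μ₀(X)|] ). In particular, the bias is controlled by the products of the nuisance estimation errors only. -/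
open MeasureTheory ProbabilityTheory


def BddMeas {S : Type*} [MeasurableSpace S] (f : S → ℝ) : Prop :=
  Measurable f ∧ ∃ C, ∀ x, |f x| ≤ C

namespace BddMeas
variable {S : Type*} [MeasurableSpace S] {f g : S → ℝ}

theorem const (c : ℝ) : BddMeas (fun _ : S => c) := ⟨measurable_const, |c|, fun _ => le_rfl⟩

theorem add (hf : BddMeas f) (hg : BddMeas g) : BddMeas (fun x => f x + g x) := by
  obtain ⟨mf, C, hC⟩ := hf
  obtain ⟨mg, D, hD⟩ := hg
  exact ⟨mf.add mg, C + D, fun x => (abs_add_le _ _).trans (add_le_add (hC x) (hD x))⟩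

theorem mul (hf : BddMeas f) (hg : BddMeas g) : BddMeas (fun x => f x * g x) := by
  obtain ⟨mf, C, hC⟩ := hf
  obtain ⟨mg, D, hD⟩ := hg
  refine ⟨mf.mul mg, C * D, fun x => ?_⟩
  rw [abs_mul]
  exact mul_le_mul (hC x) (hD x) (abs_nonneg _) ((abs_nonneg _).trans (hC x))

theorem neg (hf : BddMeas f) : BddMeas (fun x => - f x) := by
  obtain ⟨mf, C, hC⟩ := hf
  exact ⟨mf.neg, C, fun x => by rw [abs_neg]; exact hC x⟩

theorem sub (hf : BddMeas f) (hg : BddMeas g) : BddMeas (fun x => f x - g x) := by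
  simpa [sub_eq_add_neg] using hf.add hg.neg

theorem sq (hf : BddMeas f) : BddMeas (fun x => f x ^ 2) := by
  simpa [pow_two] using hf.mul hf

theorem abs' (hf : BddMeas f) : BddMeas (fun x => |f x|) := by
  obtain ⟨mf, C, hC⟩ := hf
  exact ⟨mf.abs, C, fun x => by rw [abs_abs]; exact hC x⟩

theorem inv (hf : Measurable f) {c : ℝ} (hc : 0 < c) (h : ∀ x, c ≤ f x) :
    BddMeas (fun x => (f x)⁻¹) := by
  refine ⟨hf.inv, c⁻¹, fun x => ?_⟩
  rw [abs_of_nonneg (inv_nonneg.2 (hc.le.trans (h x)))]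
  exact inv_anti₀ hc (h x)

theorem integrable {Ω : Type*} [MeasurableSpace Ω] {P : Measure Ω} [IsProbabilityMeasure P]
    {X : Ω → S} (hX : Measurable X) (hf : BddMeas f) : Integrable (fun ω => f (X ω)) P := by
  obtain ⟨mf, C, hC⟩ := hf
  exact Integrable.of_bound (mf.comp hX).aestronglyMeasurable C
    (Filter.Eventually.of_forall fun ω => hC _)

theorem integrable_mul {Ω : Type*} [MeasurableSpace Ω] {P : Measure Ω} [IsProbabilityMeasure P]
    {X : Ω → S} (hX : Measurable X) (hf : BddMeas f) {Z : Ω → ℝ} (hZ : Integrable Z P) :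
    Integrable (fun ω => f (X ω) * Z ω) P := by
  obtain ⟨mf, C, hC⟩ := hf
  exact hZ.bdd_mul (mf.comp hX).aestronglyMeasurable
    (Filter.Eventually.of_forall fun ω => hC _)

end BddMeas

theorem integral_pull {Ω S : Type*} [MeasurableSpace Ω] [mS : MeasurableSpace S]
    {P : Measure Ω} [IsProbabilityMeasure P]
    {X : Ω → S} (hX : Measurable X) {f g : S → ℝ} (hf : BddMeas f) {Z : Ω → ℝ}
    (hZ : Integrable Z P) (h : P[Z | mS.comap X] =ᵐ[P] fun ω => g (X ω)) :
    ∫ ω, f (X ω) * Z ω ∂P = ∫ ω, f (X ω) * g (X ω) ∂P := by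
  have hm : mS.comap X ≤ (inferInstance : MeasurableSpace Ω) := hX.comap_le
  have hsm : StronglyMeasurable[mS.comap X] (fun ω => f (X ω)) :=
    (hf.1.comp (comap_measurable X)).stronglyMeasurable
  have h1 := condExp_mul_of_stronglyMeasurable_left (μ := P) hsm (hf.integrable_mul hX hZ) hZ
  rw [← integral_condExp (μ := P) (f := fun ω => f (X ω) * Z ω) hm]
  refine integral_congr_ae ?_
  filter_upwards [h1, h] with ω h1 h2
  rw [← h2]
  exact h1

/-- Bias bound for the one-step relative error estimator: for `|τ̂₁ − τ̂₂| ≤ B`,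
`|E[τ̂₁(X)² − τ̂₂(X)² − 2(τ̂₁(X) − τ̂₂(X))·Γ̃] − δ(τ̂₁, τ̂₂)|
  ≤ (2B/η′)·(E[|ẽ(X) − e(X)|·|μ̃₁(X) − μ₁(X)|] + E[|ẽ(X) − e(X)|·|μ̃₀(X) − μ₀(X)|])`. -/
theorem relative_error_bias_bound
    {Ω 𝒳 : Type*} [MeasurableSpace Ω] [m𝒳 : MeasurableSpace 𝒳]
    (P : Measure Ω) [IsProbabilityMeasure P]
    (X : Ω → 𝒳) (W Y : Ω → ℝ)
    (hX : Measurable X) (hW : Measurable W) (hY : Measurable Y)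
    (hW01 : ∀ᵐ ω ∂P, W ω = 0 ∨ W ω = 1)
    (M : ℝ) (hM : 0 < M) (hYb : ∀ᵐ ω ∂P, |Y ω| ≤ M)
    (e μ₀ μ₁ : 𝒳 → ℝ)
    (he : Measurable e) (hμ₀ : Measurable μ₀) (hμ₁ : Measurable μ₁)
    (C₀ C₁ : ℝ) (hμ₀b : ∀ x, |μ₀ x| ≤ C₀) (hμ₁b : ∀ x, |μ₁ x| ≤ C₁)
    (η : ℝ) (hη₀ : 0 < η) (hη₁ : η < 1/2)
    (heb : ∀ x, η ≤ e x ∧ e x ≤ 1 - η)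
    (hce : P[W | m𝒳.comap X] =ᵐ[P] fun ω => e (X ω))
    (hc1 : P[fun ω => W ω * Y ω | m𝒳.comap X] =ᵐ[P] fun ω => e (X ω) * μ₁ (X ω))
    (hc0 : P[fun ω => (1 - W ω) * Y ω | m𝒳.comap X]
        =ᵐ[P] fun ω => (1 - e (X ω)) * μ₀ (X ω))
    (μt₀ μt₁ et : 𝒳 → ℝ)
    (hμt₀ : Measurable μt₀) (hμt₁ : Measurable μt₁) (het : Measurable et)
    (Ct₀ Ct₁ : ℝ) (hμt₀b : ∀ x, |μt₀ x| ≤ Ct₀) (hμt₁b : ∀ x, |μt₁ x| ≤ Ct₁)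
    (η' : ℝ) (hη'₀ : 0 < η') (hη'₁ : η' < 1/2)
    (hetb : ∀ x, η' ≤ et x ∧ et x ≤ 1 - η') :
    ∀ (τhat₁ τhat₂ : 𝒳 → ℝ) (B₁ B₂ B : ℝ), Measurable τhat₁ → Measurable τhat₂ →
      (∀ x, |τhat₁ x| ≤ B₁) → (∀ x, |τhat₂ x| ≤ B₂) →
      (∀ x, |τhat₁ x - τhat₂ x| ≤ B) →
      |(∫ ω, (τhat₁ (X ω) ^ 2 - τhat₂ (X ω) ^ 2
          - 2 * (τhat₁ (X ω) - τhat₂ (X ω))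
            * (W ω * (Y ω - μt₁ (X ω)) / et (X ω) + μt₁ (X ω)
              - (1 - W ω) * (Y ω - μt₀ (X ω)) / (1 - et (X ω)) - μt₀ (X ω))) ∂P)
        - ((∫ ω, (τhat₁ (X ω) - (μ₁ (X ω) - μ₀ (X ω))) ^ 2 ∂P)
            - ∫ ω, (τhat₂ (X ω) - (μ₁ (X ω) - μ₀ (X ω))) ^ 2 ∂P)|
        ≤ (2 * B / η') * ((∫ ω, |et (X ω) - e (X ω)| * |μt₁ (X ω) - μ₁ (X ω)| ∂P)
            + ∫ ω, |et (X ω) - e (X ω)| * |μt₀ (X ω) - μ₀ (X ω)| ∂P) := by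
  intro t1 t2 B₁ B₂ B mt1 mt2 ht1 ht2 hB
  have bt1 : BddMeas t1 := ⟨mt1, _, ht1⟩
  have bt2 : BddMeas t2 := ⟨mt2, _, ht2⟩
  have bm0 : BddMeas μ₀ := ⟨hμ₀, _, hμ₀b⟩
  have bm1 : BddMeas μ₁ := ⟨hμ₁, _, hμ₁b⟩
  have bn0 : BddMeas μt₀ := ⟨hμt₀, _, hμt₀b⟩
  have bn1 : BddMeas μt₁ := ⟨hμt₁, _, hμt₁b⟩
  have be : BddMeas e := ⟨he, 1, fun x => abs_le.2 ⟨by linarith [(heb x).1], by linarith [(heb x).2]⟩⟩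
  have bet : BddMeas et :=
    ⟨het, 1, fun x => abs_le.2 ⟨by linarith [(hetb x).1], by linarith [(hetb x).2]⟩⟩
  have bi : BddMeas (fun x => (et x)⁻¹) := BddMeas.inv het hη'₀ fun x => (hetb x).1
  have bj : BddMeas (fun x => (1 - et x)⁻¹) :=
    BddMeas.inv (measurable_const.sub het) hη'₀ fun x => by linarith [(hetb x).2]
  have bD : BddMeas (fun x => 2 * (t1 x - t2 x)) := (BddMeas.const 2).mul (bt1.sub bt2)
  have iW : Integrable W P := by
    refine Integrable.of_bound hW.aestronglyMeasurable 1 ?_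
    filter_upwards [hW01] with ω h
    rcases h with h | h <;> simp [h]
  have iWY : Integrable (fun ω => W ω * Y ω) P := by
    refine Integrable.of_bound (hW.mul hY).aestronglyMeasurable M ?_
    filter_upwards [hW01, hYb] with ω h hy
    rcases h with h | h <;> simp [h, hM.le, hy]
  have iVY : Integrable (fun ω => (1 - W ω) * Y ω) P := by
    refine Integrable.of_bound ((measurable_const.sub hW).mul hY).aestronglyMeasurable M ?_
    filter_upwards [hW01, hYb] with ω h hy
    rcases h with h | h <;> simp [h, hM.le, hy]
  -- coefficient functions
  obtain ⟨a, ha⟩ : ∃ a : 𝒳 → ℝ, a = fun x => -(2 * (t1 x - t2 x)) * (et x)⁻¹ := ⟨_, rfl⟩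
  obtain ⟨c, hc⟩ : ∃ c : 𝒳 → ℝ, c = fun x => (2 * (t1 x - t2 x)) * (1 - et x)⁻¹ := ⟨_, rfl⟩
  obtain ⟨b, hb⟩ : ∃ b : 𝒳 → ℝ, b = fun x => -(a x * μt₁ x) + c x * μt₀ x := ⟨_, rfl⟩
  obtain ⟨g, hg⟩ : ∃ g : 𝒳 → ℝ, g = fun x => t1 x ^ 2 - t2 x ^ 2
      - (2 * (t1 x - t2 x)) * (μt₁ x - μt₀ x) - c x * μt₀ x := ⟨_, rfl⟩
  have ba : BddMeas a := by rw [ha]; exact bD.neg.mul bi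
  have bc : BddMeas c := by rw [hc]; exact bD.mul bj
  have bb : BddMeas b := by rw [hb]; exact (ba.mul bn1).neg.add (bc.mul bn0)
  have bg : BddMeas g := by
    rw [hg]; exact ((bt1.sq.sub bt2.sq).sub (bD.mul (bn1.sub bn0))).sub (bc.mul bn0)
  have bone : BddMeas (fun x => 1 - e x) := (BddMeas.const 1).sub be
  have p1 := integral_pull hX ba iWY (g := fun x => e x * μ₁ x) hc1
  have p2 := integral_pull hX bb iW (g := e) hce
  have p3 := integral_pull hX bc iVY (g := fun x => (1 - e x) * μ₀ x) hc0
  have j1 : Integrable (fun ω => a (X ω) * (e (X ω) * μ₁ (X ω))) P :=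
    (ba.mul (be.mul bm1)).integrable hX
  have j2 : Integrable (fun ω => b (X ω) * e (X ω)) P := (bb.mul be).integrable hX
  have j3 : Integrable (fun ω => c (X ω) * ((1 - e (X ω)) * μ₀ (X ω))) P :=
    (bc.mul (bone.mul bm0)).integrable hX
  have j0 : Integrable (fun ω => g (X ω)) P := bg.integrable hX
  have k1 := ba.integrable_mul hX iWY
  have k2 := bb.integrable_mul hX iW
  have k3 := bc.integrable_mul hX iVY
  have s1 : Integrable (fun ω => (t1 (X ω) - (μ₁ (X ω) - μ₀ (X ω))) ^ 2) P :=
    (bt1.sub (bm1.sub bm0)).sq.integrable hX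
  have s2 : Integrable (fun ω => (t2 (X ω) - (μ₁ (X ω) - μ₀ (X ω))) ^ 2) P :=
    (bt2.sub (bm1.sub bm0)).sq.integrable hX
  have r1 : Integrable (fun ω => |et (X ω) - e (X ω)| * |μt₁ (X ω) - μ₁ (X ω)|) P :=
    ((bet.sub be).abs'.mul (bn1.sub bm1).abs').integrable hX
  have r0 : Integrable (fun ω => |et (X ω) - e (X ω)| * |μt₀ (X ω) - μ₀ (X ω)|) P :=
    ((bet.sub be).abs'.mul (bn0.sub bm0).abs').integrable hX
  have key : (∫ ω, (t1 (X ω) ^ 2 - t2 (X ω) ^ 2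
          - 2 * (t1 (X ω) - t2 (X ω))
            * (W ω * (Y ω - μt₁ (X ω)) / et (X ω) + μt₁ (X ω)
              - (1 - W ω) * (Y ω - μt₀ (X ω)) / (1 - et (X ω)) - μt₀ (X ω))) ∂P)
      = ∫ ω, (g (X ω) + a (X ω) * (e (X ω) * μ₁ (X ω)) + b (X ω) * e (X ω)
          + c (X ω) * ((1 - e (X ω)) * μ₀ (X ω))) ∂P := by
    rw [integral_add ((j0.fun_add j1).fun_add j2) j3, integral_add (j0.fun_add j1) j2, integral_add j0 j1,
      ← p1, ← p2, ← p3, ← integral_add j0 k1, ← integral_add (j0.fun_add k1) k2,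
      ← integral_add ((j0.fun_add k1).fun_add k2) k3]
    refine integral_congr_ae (Filter.Eventually.of_forall fun ω => ?_)
    simp only [hg, hb, ha, hc, Pi.add_apply]
    ring
  have q : Integrable (fun ω => g (X ω) + a (X ω) * (e (X ω) * μ₁ (X ω)) + b (X ω) * e (X ω)
          + c (X ω) * ((1 - e (X ω)) * μ₀ (X ω))) P := ((j0.add j1).add j2).add j3
  have s3 : Integrable (fun ω => (t1 (X ω) - (μ₁ (X ω) - μ₀ (X ω))) ^ 2
      - (t2 (X ω) - (μ₁ (X ω) - μ₀ (X ω))) ^ 2) P := s1.sub s2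
  rw [key, ← integral_sub s1 s2, ← integral_sub q s3, ← integral_add r1 r0,
    ← integral_const_mul, ← Real.norm_eq_abs]
  refine norm_integral_le_of_norm_le ((r1.fun_add r0).const_mul _)
    (Filter.Eventually.of_forall fun ω => ?_)
  simp only [hg, hb, ha, hc, Pi.add_apply, Pi.sub_apply]
  generalize X ω = x
  have hp := (hetb x).1
  have hp2 : η' ≤ 1 - et x := by linarith [(hetb x).2]
  have hne : et x ≠ 0 := by linarith
  have hne2 : 1 - et x ≠ 0 := by linarith
  have hB0 : 0 ≤ B := (abs_nonneg _).trans (hB x)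
  rw [Real.norm_eq_abs]
  have h1 : |(et x - e x) * (μt₁ x - μ₁ x) * (et x)⁻¹|
      ≤ |et x - e x| * |μt₁ x - μ₁ x| * η'⁻¹ := by
    rw [abs_mul, abs_mul, abs_of_pos (inv_pos.2 (hη'₀.trans_le hp))]
    exact mul_le_mul_of_nonneg_left (inv_anti₀ hη'₀ hp) (by positivity)
  have h2 : |(et x - e x) * (μt₀ x - μ₀ x) * (1 - et x)⁻¹|
      ≤ |et x - e x| * |μt₀ x - μ₀ x| * η'⁻¹ := by
    rw [abs_mul, abs_mul, abs_of_pos (inv_pos.2 (hη'₀.trans_le hp2))]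
    exact mul_le_mul_of_nonneg_left (inv_anti₀ hη'₀ hp2) (by positivity)
  calc _ = |(2 * (t1 x - t2 x)) * ((et x - e x) * (μt₁ x - μ₁ x) * (et x)⁻¹
        + (et x - e x) * (μt₀ x - μ₀ x) * (1 - et x)⁻¹)| := by
        rw [← abs_neg]
        congr 1
        field_simp
        ring
    _ ≤ (2 * B) * (|et x - e x| * |μt₁ x - μ₁ x| * η'⁻¹
        + |et x - e x| * |μt₀ x - μ₀ x| * η'⁻¹) := by
        rw [abs_mul]
        refine mul_le_mul ?_ ((abs_add_le _ _).trans (add_le_add h1 h2)) (abs_nonneg _) (by positivity)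
        rw [abs_mul, abs_two]
        linarith [hB x]
    _ = _ := by ring
end
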